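/- Cancellation lemma for multipliers: Let X, Y be rearrangement-invariant Banach function spaces over 𝕋 with the Fatou property. If X ⊙ M(X,Y) = Y (X factorizes Y), then the Köthe dual of M(X,Y) satisfies M(X,Y)' = X ⊙ Y'. -/

import Mathlib

open MeasureTheory Filter Topology ComplexConjugate
open scoped ENNReal

noncomputable section

instance fact_two_pi_pos : Fact (0 < 2 * Real.pi) := ⟨by positivity⟩

/-- The unit circle, modelled additively as `ℝ / 2πℤ`. -/
abbrev 𝕋 := AddCircle (2 * Real.pi)

/-- Normalized Lebesgue (Haar) measure on the circle. -/
def μ : Measure 𝕋 := AddCircle.haarAddCircle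

/-- A (quasi-)norm functional on measurable functions on the circle, with values in `ℝ≥0∞`. -/
abbrev NormFn := (𝕋 → ℂ) → ℝ≥0∞

/-- Membership in the function space determined by the norm functional `N`. -/
def MemN (N : NormFn) (f : 𝕋 → ℂ) : Prop :=
  AEStronglyMeasurable f μ ∧ N f < ⊤

/-- The closed unit ball of the space determined by `N`. -/
def unitBall (N : NormFn) : Set (𝕋 → ℂ) :=
  {f | AEStronglyMeasurable f μ ∧ N f ≤ 1}

/-- The Köthe dual (associate space) norm of `N`. -/
def kdualN (N : NormFn) : NormFn := fun g =>
  ⨆ f : unitBall N, ∫⁻ t, (‖f.1 t * g t‖₊ : ℝ≥0∞) ∂μ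

/-- The norm of the space `M(X,Y)` of pointwise multipliers, i.e. the operator norm of
multiplication by `a` from the space of `NX` to the space of `NY`. -/
def multN (NX NY : NormFn) : NormFn := fun a =>
  ⨆ f : unitBall NX, NY (fun t => a t * f.1 t)

/-- The norm of the pointwise product space `X ⊙ Y`. -/
def prodN (NX NY : NormFn) : NormFn := fun h =>
  ⨅ p : {p : (𝕋 → ℂ) × (𝕋 → ℂ) //
      AEStronglyMeasurable p.1 μ ∧ AEStronglyMeasurable p.2 μ ∧
      h =ᵐ[μ] fun t => p.1 t * p.2 t},
    NX p.1.1 * NY p.1.2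

/-- Membership in the Hardy space `H[X]`: membership in `X` together with the vanishing of all
negative Fourier coefficients. -/
def HardyMemN (N : NormFn) (f : 𝕋 → ℂ) : Prop :=
  AEStronglyMeasurable f μ ∧ N f < ⊤ ∧ ∀ n : ℤ, n < 0 → fourierCoeff f n = 0

/-- Operator norm of `T` from the space of `N1` to that of `N2`. -/
def opN (N1 N2 : NormFn) (T : (𝕋 → ℂ) → (𝕋 → ℂ)) : ℝ≥0∞ :=
  ⨆ f : unitBall N1, N2 (T f.1)

/-- Operator norm of `T` restricted to the Hardy space of `N1`, measured in `N2`. -/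
def hardyOpN (N1 N2 : NormFn) (T : (𝕋 → ℂ) → (𝕋 → ℂ)) : ℝ≥0∞ :=
  ⨆ f : {f : 𝕋 → ℂ // HardyMemN N1 f ∧ N1 f ≤ 1}, N2 (T f.1)

/-- `P` is (a realization of) the Riesz projection: it respects a.e. equality and, on integrable
functions, keeps the Fourier coefficients with nonnegative index and kills the others. -/
def IsRieszProj (P : (𝕋 → ℂ) → (𝕋 → ℂ)) : Prop :=
  (∀ f g, f =ᵐ[μ] g → P f =ᵐ[μ] P g) ∧
  (∀ f g, P (f + g) =ᵐ[μ] P f + P g) ∧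
  (∀ (c : ℂ) f, P (fun t => c * f t) =ᵐ[μ] fun t => c * P f t) ∧
  (∀ f, Integrable f μ → Integrable (P f) μ ∧
    ∀ n : ℤ, fourierCoeff (P f) n = if 0 ≤ n then fourierCoeff f n else 0)

/-- The flip operator `(Jf)(t) = t⁻¹ f(t⁻¹)`, written additively on `ℝ/2πℤ`. -/
def Jflip (f : 𝕋 → ℂ) : 𝕋 → ℂ := fun x => fourier (-1) x * f (-x)

/-- The dilation operator `D_s`: `(D_s f)(e^{iθ}) = f(e^{iθs})` for `θs ∈ [0,2π)`, `0` otherwise. -/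
def dilOp (s : ℝ) (f : 𝕋 → ℂ) : 𝕋 → ℂ := fun x =>
  let θ : ℝ := (AddCircle.equivIco (2 * Real.pi) 0 x : ℝ)
  if 0 ≤ s * θ ∧ s * θ < 2 * Real.pi then f ((s * θ : ℝ) : 𝕋) else 0

/-- Operator norm of the dilation `D_s` on the space of `N`. -/
def dilNorm (N : NormFn) (s : ℝ) : ℝ≥0∞ :=
  ⨆ f : unitBall N, N (dilOp s f.1)

/-- `α` is the lower Boyd index of the space of `N`. -/
def boydLower (N : NormFn) (α : ℝ) : Prop :=
  Tendsto (fun s : ℝ => Real.log (dilNorm N (1 / s)).toReal / Real.log s) (𝓝[>] 0) (𝓝 α)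

/-- `β` is the upper Boyd index of the space of `N`. -/
def boydUpper (N : NormFn) (β : ℝ) : Prop :=
  Tendsto (fun s : ℝ => Real.log (dilNorm N (1 / s)).toReal / Real.log s) atTop (𝓝 β)

/-- The space of `N` has nontrivial Boyd indices. -/
def NontrivialBoyd (N : NormFn) : Prop :=
  ∃ α β : ℝ, 0 < α ∧ β < 1 ∧ boydLower N α ∧ boydUpper N β

/-- Trigonometric polynomials. -/
def IsTrigPoly (f : 𝕋 → ℂ) : Prop :=
  ∃ (n : ℕ) (c : ℤ → ℂ), f = fun x => ∑ k ∈ Finset.Icc (-(n : ℤ)) n, c k * fourier k x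

/-- Analytic trigonometric polynomials. -/
def IsAnalyticPoly (f : 𝕋 → ℂ) : Prop :=
  ∃ (n : ℕ) (c : ℕ → ℂ), f = fun x => ∑ k ∈ Finset.range (n + 1), c k * fourier (k : ℤ) x

/-- The Fejér kernel `K_n`. -/
def fejer (n : ℕ) : 𝕋 → ℂ := fun x =>
  ∑ k ∈ Finset.Icc (-(n : ℤ)) n, (1 - (|(k : ℝ)| / (n + 1)) : ℂ) * fourier k x

/-- Convolution with the Fejér kernel, `f * K_n`. -/
def convFejer (n : ℕ) (f : 𝕋 → ℂ) : 𝕋 → ℂ := fun x =>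
  ∫ y, f y * fejer n (x - y) ∂μ

/-- The Banach envelope norm of `N`. -/
def envN (N : NormFn) : NormFn := fun f =>
  ⨅ d : {d : Σ n : ℕ, Fin n → 𝕋 → ℂ // f =ᵐ[μ] fun t => ∑ i, d.2 i t},
    ∑ i, N (d.1.2 i)

/-- The Banach envelope norm of the Hardy space `H[Z]` (decompositions within `H[Z]`). -/
def envHardyN (N : NormFn) : NormFn := fun f =>
  ⨅ d : {d : Σ n : ℕ, Fin n → 𝕋 → ℂ //
      (∀ i, HardyMemN N (d.2 i)) ∧ f =ᵐ[μ] fun t => ∑ i, d.2 i t},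
    ∑ i, N (d.1.2 i)

/-- The norm of the 1/2-concavification `Z^{(1/2)}`: `‖f‖ = ‖|f|^{1/2}‖²`. -/
def concavHalf (N : NormFn) : NormFn := fun f =>
  (N (fun t => (Real.sqrt ‖f t‖ : ℂ))) ^ 2

/-- `dist_{M(X,Y)}(a, conj H[M(X,Y)])`: the infimum of multiplier norms of symbols `b` whose
Fourier coefficients agree with those of `a` for positive indices. -/
def hankelDist (NX NY : NormFn) (a : 𝕋 → ℂ) : ℝ≥0∞ :=
  ⨅ b : {b : 𝕋 → ℂ // AEStronglyMeasurable b μ ∧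
      ∀ k : ℤ, 0 < k → fourierCoeff b k = fourierCoeff a k},
    multN NX NY b.1

/-- The Kuratowski measure of noncompactness of the set `A`, with diameters measured by `N`. -/
def setMNC (N : NormFn) (A : Set (𝕋 → ℂ)) : ℝ≥0∞ :=
  ⨅ d : {d : ℝ≥0∞ // ∃ (n : ℕ) (B : Fin n → Set (𝕋 → ℂ)),
      (∀ f ∈ A, ∃ i, f ∈ B i) ∧
      ∀ i, ∀ f ∈ B i, ∀ g ∈ B i, N (fun t => f t - g t) ≤ d}, d.1

/-- The decreasing rearrangement `f*` of `f`. -/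
def decRearr (f : 𝕋 → ℂ) (s : ℝ) : ℝ≥0∞ :=
  sInf {l : ℝ≥0∞ | μ {t | l < (‖f t‖₊ : ℝ≥0∞)} ≤ ENNReal.ofReal s}

/-- The Lorentz norm `‖f‖_{L^{p,q}}` on the circle (total measure 1). -/
def lorentzN (p q : ℝ≥0∞) : NormFn := fun f =>
  if q = ⊤ then ⨆ s : Set.Ioo (0 : ℝ) 1, decRearr f s.1 * ENNReal.ofReal (s.1 ^ (1 / p).toReal)
  else (∫⁻ s in Set.Ioo (0 : ℝ) 1,
      (decRearr f s * ENNReal.ofReal (s ^ (1 / p).toReal)) ^ q.toReal / ENNReal.ofReal s)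
    ^ (1 / q).toReal

/-- `dist_{L^{p,q}}(a, conj H^{p,q})` expressed via matching of positive Fourier coefficients. -/
def lorDist (p q : ℝ≥0∞) (a : 𝕋 → ℂ) : ℝ≥0∞ :=
  ⨅ b : {b : 𝕋 → ℂ // AEStronglyMeasurable b μ ∧
      ∀ k : ℤ, 0 < k → fourierCoeff b k = fourierCoeff a k},
    lorentzN p q b.1

/-- The analytic polynomial with coefficients `c 0, …, c n`. -/
def aPoly (n : ℕ) (c : ℕ → ℂ) : 𝕋 → ℂ := fun x =>
  ∑ k ∈ Finset.range (n + 1), c k * fourier (k : ℤ) x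

/-- The polynomial `p^c(t) = conj (p(1/t))`, i.e. with conjugated coefficients. -/
def aPolyC (n : ℕ) (c : ℕ → ℂ) : 𝕋 → ℂ := aPoly n fun k => (starRingEnd ℂ) (c k)

/-- A Banach function space over the circle, encoded by its norm functional. -/
structure BFS where
  N : NormFn
  ae_congr : ∀ f g, f =ᵐ[μ] g → N f = N g
  add_le : ∀ f g, N (f + g) ≤ N f + N g
  smul_eq : ∀ (c : ℂ) (f), N (fun t => c * f t) = (‖c‖₊ : ℝ≥0∞) * N f
  ideal : ∀ f g, AEStronglyMeasurable g μ → (∀ᵐ t ∂μ, ‖g t‖ ≤ ‖f t‖) → N g ≤ N f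
  const_finite : N (fun _ => 1) < ⊤
  norm_eq_zero : ∀ f, AEStronglyMeasurable f μ → N f = 0 → f =ᵐ[μ] fun _ => 0
  semiFatou : ∀ (f : ℕ → 𝕋 → ℂ) (g : 𝕋 → ℂ),
    (∀ n, AEStronglyMeasurable (f n) μ) → AEStronglyMeasurable g μ →
    (∀ᵐ t ∂μ, Monotone (fun n => ‖f n t‖) ∧
      Tendsto (fun n => ‖f n t‖) atTop (𝓝 ‖g t‖)) →
    N g < ⊤ → N g = ⨆ n, N (f n)
  complete : ∀ f : ℕ → 𝕋 → ℂ, (∀ n, AEStronglyMeasurable (f n) μ) →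
    (∑' n, N (f n)) < ⊤ →
    ∃ g, AEStronglyMeasurable g μ ∧ N g < ⊤ ∧
      Tendsto (fun n => N (fun t => g t - ∑ k ∈ Finset.range n, f k t)) atTop (𝓝 0)

/-- A quasi-Banach function space over the circle, with quasi-triangle constant `kappa`. -/
structure QBFS where
  N : NormFn
  kappa : ℝ≥0∞
  one_le_kappa : 1 ≤ kappa
  kappa_finite : kappa < ⊤
  ae_congr : ∀ f g, f =ᵐ[μ] g → N f = N g
  add_le : ∀ f g, N (f + g) ≤ kappa * (N f + N g)
  smul_eq : ∀ (c : ℂ) (f), N (fun t => c * f t) = (‖c‖₊ : ℝ≥0∞) * N f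
  ideal : ∀ f g, AEStronglyMeasurable g μ → (∀ᵐ t ∂μ, ‖g t‖ ≤ ‖f t‖) → N g ≤ N f
  const_finite : N (fun _ => 1) < ⊤
  norm_eq_zero : ∀ f, AEStronglyMeasurable f μ → N f = 0 → f =ᵐ[μ] fun _ => 0
  semiFatou : ∀ (f : ℕ → 𝕋 → ℂ) (g : 𝕋 → ℂ),
    (∀ n, AEStronglyMeasurable (f n) μ) → AEStronglyMeasurable g μ →
    (∀ᵐ t ∂μ, Monotone (fun n => ‖f n t‖) ∧
      Tendsto (fun n => ‖f n t‖) atTop (𝓝 ‖g t‖)) →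
    N g < ⊤ → N g = ⨆ n, N (f n)

/-- Rearrangement invariance of the norm functional `N`. -/
def RearrInvN (N : NormFn) : Prop :=
  ∀ f g, AEStronglyMeasurable f μ → AEStronglyMeasurable g μ →
    (∀ lam : ℝ, 0 < lam → μ {t | lam < ‖f t‖} = μ {t | lam < ‖g t‖}) →
    N f = N g

/-- `f` is an order continuous element of the space of `N`. -/
def OrderContElemN (N : NormFn) (f : 𝕋 → ℂ) : Prop :=
  MemN N f ∧ ∀ g : ℕ → 𝕋 → ℂ, (∀ n, AEStronglyMeasurable (g n) μ) →
    (∀ n, ∀ᵐ t ∂μ, ‖g n t‖ ≤ ‖f t‖) →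
    (∀ᵐ t ∂μ, Tendsto (fun n => ‖g n t‖) atTop (𝓝 0)) →
    Tendsto (fun n => N (g n)) atTop (𝓝 0)

/-- The space of `N` is order continuous (equivalently, separable). -/
def OrderContN (N : NormFn) : Prop :=
  ∀ f, MemN N f → OrderContElemN N f

/-- The Fatou property of the norm functional `N`. -/
def FatouN (N : NormFn) : Prop :=
  ∀ (f : ℕ → 𝕋 → ℂ) (g : 𝕋 → ℂ),
    (∀ n, AEStronglyMeasurable (f n) μ) → AEStronglyMeasurable g μ →
    (∀ᵐ t ∂μ, Monotone (fun n => ‖f n t‖) ∧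
      Tendsto (fun n => ‖f n t‖) atTop (𝓝 ‖g t‖)) →
    N g = ⨆ n, N (f n)


theorem hilbert_fip {H : Type*} [NormedAddCommGroup H] [InnerProductSpace ℝ H] [CompleteSpace H]
    {ι : Type*} [Nonempty ι] (S : ι → Set H) (hcl : ∀ i, IsClosed (S i))
    (hcv : ∀ i, Convex ℝ (S i)) (R : ℝ) (hR : ∀ i, ∀ x ∈ S i, ‖x‖ ≤ R)
    (hne : ∀ F : Finset ι, F.Nonempty → ∃ x, ∀ i ∈ F, x ∈ S i) : ∃ x, ∀ i, x ∈ S i := by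
  classical
  obtain ⟨i0⟩ := ‹Nonempty ι›
  let P : Finset ι → Set H := fun F => {x | x ∈ S i0 ∧ ∀ i ∈ F, x ∈ S i}
  have hPne : ∀ F, (P F).Nonempty := by
    intro F
    obtain ⟨x, hx⟩ := hne (insert i0 F) ⟨i0, by simp⟩
    exact ⟨x, hx i0 (by simp), fun i hi => hx i (by simp [hi])⟩
  let d : Finset ι → ℝ := fun F => Metric.infDist 0 (P F)
  have hd : ∀ F, ∀ x ∈ P F, d F ≤ ‖x‖ := by
    intro F x hx
    have := Metric.infDist_le_dist_of_mem (x := (0 : H)) hx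
    simpa [d] using this
  have hd0 : ∀ F, 0 ≤ d F := fun F => Metric.infDist_nonneg
  have hbdd : BddAbove (Set.range d) := by
    refine ⟨R, ?_⟩
    rintro _ ⟨F, rfl⟩
    obtain ⟨x, hx⟩ := hPne F
    exact (hd F x hx).trans (hR i0 x hx.1)
  set D := ⨆ F, d F with hD
  have hdD : ∀ F, d F ≤ D := fun F => le_ciSup hbdd F
  have hD0 : 0 ≤ D := (hd0 ∅).trans (hdD ∅)
  have hap : ∀ F, ∀ ε > 0, ∃ x ∈ P F, ‖x‖ ≤ D + ε := by
    intro F ε hε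
    have h1 : Metric.infDist (0 : H) (P F) < D + ε := by
      have := hdD F
      simp only [d] at this
      linarith
    obtain ⟨x, hx, hlt⟩ := (Metric.infDist_lt_iff (hPne F)).1 h1
    exact ⟨x, hx, by simpa using hlt.le⟩
  have key : ∀ F, ∀ ε > 0, D - ε ≤ d F → ∀ x ∈ P F, ∀ y ∈ P F, ‖x‖ ≤ D + ε → ‖y‖ ≤ D + ε →
      ‖x - y‖ ^ 2 ≤ 16 * D * ε + 4 * ε ^ 2 := by
    intro F ε hε hF x hx y hy hxn hyn
    have hm : (1 / 2 : ℝ) • x + (1 / 2 : ℝ) • y ∈ P F :=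
      ⟨hcv i0 hx.1 hy.1 (by norm_num) (by norm_num) (by norm_num),
        fun i hi => hcv i (hx.2 i hi) (hy.2 i hi) (by norm_num) (by norm_num) (by norm_num)⟩
    have h1 := hd F _ hm
    rw [← smul_add, norm_smul] at h1
    have h2 := parallelogram_law_with_norm ℝ x y
    have h3 : ‖(1 / 2 : ℝ)‖ = 1 / 2 := by norm_num
    rw [h3] at h1
    have h4 : D - ε ≤ ‖x + y‖ / 2 := by linarith
    have h5 : D ^ 2 - 2 * D * ε ≤ (‖x + y‖ / 2) ^ 2 := by
      rcases le_total ε D with h | h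
      · nlinarith [sq_nonneg ε]
      · nlinarith [sq_nonneg (‖x + y‖ / 2)]
    nlinarith [norm_nonneg x, norm_nonneg y]
  have hF : ∀ n : ℕ, ∃ F, D - 1 / ((n : ℝ) + 1) ≤ d F := by
    intro n
    obtain ⟨F, hF⟩ := exists_lt_of_lt_ciSup (f := d) (b := D - 1 / ((n : ℝ) + 1))
      (by have : 0 < 1 / ((n : ℝ) + 1) := by positivity
          linarith)
    exact ⟨F, hF.le⟩
  choose F hF using hF
  let G : ℕ → Finset ι := fun n => (Finset.range (n + 1)).biUnion F
  have hPG : ∀ n m, n ≤ m → ∀ x ∈ P (G m), x ∈ P (F n) := by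
    intro n m hnm x hx
    refine ⟨hx.1, fun i hi => hx.2 i ?_⟩
    simp only [G, Finset.mem_biUnion, Finset.mem_range]
    exact ⟨n, by omega, hi⟩
  have hpos : ∀ n : ℕ, 0 < 1 / ((n : ℝ) + 1) := fun n => by positivity
  choose x hxP hxn using fun n : ℕ => hap (G n) (1 / ((n : ℝ) + 1)) (hpos n)
  have hmono : ∀ n m : ℕ, n ≤ m → 1 / ((m : ℝ) + 1) ≤ 1 / ((n : ℝ) + 1) := fun n m h =>
    Nat.one_div_le_one_div h
  let e : ℕ → ℝ := fun n => Real.sqrt (16 * D * (1 / ((n : ℝ) + 1)) + 4 * (1 / ((n : ℝ) + 1)) ^ 2)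
  have he : Tendsto e atTop (𝓝 0) := by
    have h1 := tendsto_one_div_add_atTop_nhds_zero_nat (𝕜 := ℝ)
    have h2 := ((h1.const_mul (16 * D)).add ((h1.pow 2).const_mul 4)).sqrt
    simpa [e] using h2
  have hdist : ∀ n m, n ≤ m → dist (x n) (x m) ≤ e n := by
    intro n m hnm
    rw [dist_eq_norm]
    apply Real.le_sqrt_of_sq_le
    exact key (F n) _ (hpos n) (hF n) _ (hPG n n le_rfl _ (hxP n)) _ (hPG n m hnm _ (hxP m))
      (hxn n) ((hxn m).trans (by linarith [hmono n m hnm]))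
  have hcau : CauchySeq x := by
    refine cauchySeq_of_le_tendsto_0 (fun n => 2 * e n) ?_ (by simpa using he.const_mul 2)
    intro n m N hn hm
    have h1 := hdist N n hn
    have h2 := hdist N m hm
    have := dist_triangle_left (x n) (x m) (x N)
    linarith
  obtain ⟨z, hz⟩ := cauchySeq_tendsto_of_complete hcau
  refine ⟨z, fun i => ?_⟩
  choose y hyP hyn using fun n : ℕ => hap (insert i (G n)) (1 / ((n : ℝ) + 1)) (hpos n)
  have hxy : Tendsto (fun n => dist (x n) (y n)) atTop (𝓝 0) := by
    refine squeeze_zero (fun n => dist_nonneg) (fun n => ?_) he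
    rw [dist_eq_norm]
    apply Real.le_sqrt_of_sq_le
    exact key (F n) _ (hpos n) (hF n) _ (hPG n n le_rfl _ (hxP n)) _
      (hPG n n le_rfl _ ⟨(hyP n).1, fun j hj => (hyP n).2 j (by simp [hj])⟩)
      (hxn n) (hyn n)
  have hy : Tendsto y atTop (𝓝 z) := (tendsto_iff_of_dist hxy).1 hz
  exact (hcl i).mem_of_tendsto hy (Eventually.of_forall fun n => (hyP n).2 i (by simp))

theorem finite_minimax {E : Type*} [AddCommGroup E] [Module ℝ E] (B : Set E)
    {ι : Type*} [Fintype ι] [Nonempty ι] (K : ι → E → ℝ≥0∞)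
    (hB : Convex ℝ B)
    (hK : ∀ i, ∀ a ∈ B, ∀ b ∈ B, ∀ s t : ℝ, 0 ≤ s → 0 ≤ t → s + t = 1 →
      K i (s • a + t • b) ≤ ENNReal.ofReal s * K i a + ENNReal.ofReal t * K i b)
    (C L : ℝ) (hC : 0 ≤ C) (hCL : C < L)
    (h : ∀ l : ι → ℝ, (∀ i, 0 < l i) → ∑ i, l i = 1 →
      ∃ r ∈ B, ∑ i, ENNReal.ofReal (l i) * K i r ≤ ENNReal.ofReal C) :
    ∃ r ∈ B, ∀ i, K i r < ENNReal.ofReal L := by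
  classical
  by_contra hcon
  let T : Set (ι → ℝ) := {t | ∃ r ∈ B, ∀ i, K i r < ENNReal.ofReal (t i)}
  have hTo : IsOpen T := by
    have : T = ⋃ r ∈ B, ⋂ i, {t : ι → ℝ | K i r < ENNReal.ofReal (t i)} := by
      ext t; simp [T]
    rw [this]
    refine isOpen_biUnion fun r _ => isOpen_iInter_of_finite fun i => ?_
    exact isOpen_lt continuous_const (ENNReal.continuous_ofReal.comp (continuous_apply i))
  have hTc : Convex ℝ T := by
    rintro t₁ ⟨r₁, hr₁, h₁⟩ t₂ ⟨r₂, hr₂, h₂⟩ a b ha hb hab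
    refine ⟨a • r₁ + b • r₂, hB hr₁ hr₂ ha hb hab, fun i => ?_⟩
    refine (hK i r₁ hr₁ r₂ hr₂ a b ha hb hab).trans_lt ?_
    have p1 : 0 < t₁ i := ENNReal.ofReal_pos.1 ((zero_le).trans_lt (h₁ i))
    have p2 : 0 < t₂ i := ENNReal.ofReal_pos.1 ((zero_le).trans_lt (h₂ i))
    simp only [Pi.add_apply, Pi.smul_apply, smul_eq_mul]
    rw [ENNReal.ofReal_add (by positivity) (by positivity), ENNReal.ofReal_mul ha,
      ENNReal.ofReal_mul hb]
    rcases ha.eq_or_lt with rfl | ha'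
    · have hb1 : b = 1 := by linarith
      subst hb1
      simpa using h₂ i
    · refine ENNReal.add_lt_add_of_lt_of_le ?_ ?_ ?_
      · exact (ENNReal.mul_lt_top ENNReal.ofReal_lt_top ((h₂ i).trans ENNReal.ofReal_lt_top)).ne
      · exact ENNReal.mul_lt_mul_right (by simpa using ha') ENNReal.ofReal_ne_top (h₁ i)
      · gcongr
        exact (h₂ i).le
  have hp : (fun _ => L : ι → ℝ) ∉ T := fun ⟨r, hr, hh⟩ => hcon ⟨r, hr, hh⟩
  obtain ⟨f, hf⟩ := geometric_hahn_banach_open_point hTc hTo hp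
  -- coordinates
  let a : ι → ℝ := fun i => - f (Pi.single i 1)
  have hfa : ∀ t : ι → ℝ, f t = - ∑ i, a i * t i := by
    intro t
    have : t = ∑ i, t i • (Pi.single i 1 : ι → ℝ) := by
      ext j; simp [Finset.sum_apply, Pi.single_apply]
    conv_lhs => rw [this]
    rw [map_sum, ← Finset.sum_neg_distrib]
    refine Finset.sum_congr rfl fun i _ => ?_
    simp [a, mul_comm]
  -- a point of T with finite coordinates
  have hcard : (0 : ℝ) < Fintype.card ι := by exact_mod_cast Fintype.card_pos
  have hunif : ∀ r, ∀ l : ι → ℝ, (∀ i, 0 < l i) →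
      ∑ i, ENNReal.ofReal (l i) * K i r ≤ ENNReal.ofReal C → ∀ i, K i r ≠ ⊤ := by
    intro r l hl hs i hi
    have h1 : ENNReal.ofReal (l i) * K i r ≤ ENNReal.ofReal C :=
      (Finset.single_le_sum (f := fun i => ENNReal.ofReal (l i) * K i r)
        (fun _ _ => zero_le) (Finset.mem_univ i)).trans hs
    rw [hi, ENNReal.mul_top (by simpa using hl i)] at h1
    simp at h1
  have hreal : ∀ r ∈ B, (∀ i, K i r ≠ ⊤) → ∀ e > 0, (fun i => (K i r).toReal + e) ∈ T := by
    intro r hr hfin e he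
    refine ⟨r, hr, fun i => ?_⟩
    rw [ENNReal.ofReal_add ENNReal.toReal_nonneg he.le, ENNReal.ofReal_toReal (hfin i)]
    exact ENNReal.lt_add_right (hfin i) (by simpa using he)
  let u : ι → ℝ := fun _ => 1 / Fintype.card ι
  have hu : ∀ i, 0 < u i := fun i => by simp only [u]; positivity
  have hus : ∑ i, u i = 1 := by simp [u]
  obtain ⟨r0, hr0, hr0s⟩ := h u hu hus
  have hr0T := hreal r0 hr0 (hunif r0 u hu hr0s) 1 one_pos
  have ha0 : ∀ i, 0 ≤ a i := by
    intro i
    by_contra hneg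
    push Not at hneg
    -- move far in direction i
    set t0 : ι → ℝ := fun i => (K i r0).toReal + 1
    obtain ⟨s, hs⟩ : ∃ s : ℝ, 0 ≤ s ∧ f (fun _ => L) ≤ f t0 + s * (- a i) := by
      refine ⟨max 0 ((f (fun _ => L) - f t0) / (- a i)), le_max_left _ _, ?_⟩
      have hp' : 0 < - a i := by linarith
      have : (f (fun _ => L) - f t0) / (- a i) * (- a i) = f (fun _ => L) - f t0 :=
        div_mul_cancel₀ _ hp'.ne'
      have h2 := mul_le_mul_of_nonneg_right
        (le_max_right 0 ((f (fun _ => L) - f t0) / (- a i))) hp'.le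
      linarith
    have hmem : t0 + s • (Pi.single i 1 : ι → ℝ) ∈ T := by
      obtain ⟨r, hr, hh⟩ := hr0T
      refine ⟨r, hr, fun j => (hh j).trans_le (ENNReal.ofReal_le_ofReal ?_)⟩
      simp only [Pi.add_apply, Pi.smul_apply, smul_eq_mul]
      have : 0 ≤ s * (Pi.single i 1 : ι → ℝ) j := by
        refine mul_nonneg hs.1 ?_
        rw [Pi.single_apply]; split_ifs <;> norm_num
      linarith
    have h3 := hf _ hmem
    rw [map_add, map_smul, smul_eq_mul] at h3
    have h4 : f (Pi.single i 1) = - a i := by simp [a]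
    rw [h4] at h3
    linarith [hs.2]
  have hA0 : 0 < ∑ i, a i := by
    refine lt_of_le_of_ne (Finset.sum_nonneg fun i _ => ha0 i) fun h0 => ?_
    have hz : ∀ i, a i = 0 := fun i =>
      (Finset.sum_eq_zero_iff_of_nonneg (fun i _ => ha0 i)).1 h0.symm i (Finset.mem_univ i)
    have h3 := hf _ hr0T
    rw [hfa, hfa] at h3
    simp [hz] at h3
  set A := ∑ i, a i with hA
  -- perturbation
  obtain ⟨δ, hδ0, hδ1, hδ⟩ : ∃ δ : ℝ, 0 < δ ∧ δ < 1 ∧ C < (1 - δ) * L := by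
    have hL : 0 < L := by linarith
    refine ⟨(L - C) / (2 * L), by apply div_pos <;> linarith, ?_, ?_⟩
    · rw [div_lt_one (by linarith)]; linarith
    · have : (L - C) / (2 * L) * L = (L - C) / 2 := by field_simp
      nlinarith
  let l : ι → ℝ := fun i => (1 - δ) * (a i / A) + δ * u i
  have hl : ∀ i, 0 < l i := by
    intro i
    have h1 : 0 ≤ (1 - δ) * (a i / A) :=
      mul_nonneg (by linarith) (div_nonneg (ha0 i) hA0.le)
    have h2 : 0 < δ * u i := mul_pos hδ0 (hu i)
    simp only [l]; linarith
  have hls : ∑ i, l i = 1 := by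
    simp only [l]
    rw [Finset.sum_add_distrib, ← Finset.mul_sum, ← Finset.mul_sum, hus, ← Finset.sum_div, ← hA,
      div_self hA0.ne']
    ring
  obtain ⟨r, hr, hrs⟩ := h l hl hls
  have hfin := hunif r l hl hrs
  have hsum : ∑ i, l i * (K i r).toReal ≤ C := by
    have h1 := ENNReal.toReal_mono ENNReal.ofReal_ne_top hrs
    rw [ENNReal.toReal_ofReal hC, ENNReal.toReal_sum
      (fun i _ => ENNReal.mul_ne_top ENNReal.ofReal_ne_top (hfin i))] at h1
    refine le_trans (le_of_eq (Finset.sum_congr rfl fun i _ => ?_)) h1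
    rw [ENNReal.toReal_mul, ENNReal.toReal_ofReal (hl i).le]
  have hge : ∑ i, l i * (K i r).toReal ≥ (1 - δ) * (∑ i, a i * (K i r).toReal) / A := by
    rw [mul_div_assoc, Finset.sum_div, Finset.mul_sum]
    refine Finset.sum_le_sum fun i _ => ?_
    have : 0 ≤ δ * u i * (K i r).toReal :=
      mul_nonneg (mul_pos hδ0 (hu i)).le ENNReal.toReal_nonneg
    have h2 : l i * (K i r).toReal = (1 - δ) * (a i * (K i r).toReal / A)
        + δ * u i * (K i r).toReal := by simp only [l]; ring
    linarith
  have hLe : L * A ≤ ∑ i, a i * (K i r).toReal := by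
    refine le_of_forall_pos_le_add fun e he => ?_
    have h3 := hf _ (hreal r hr hfin (e / A) (by positivity))
    rw [hfa, hfa] at h3
    have h4 : ∑ i, a i * ((K i r).toReal + e / A) = ∑ i, a i * (K i r).toReal + e := by
      simp only [mul_add]
      rw [Finset.sum_add_distrib, ← Finset.sum_mul, ← hA, mul_div_cancel₀ _ hA0.ne']
    rw [h4, ← Finset.sum_mul, ← hA] at h3
    linarith
  have hfinal : (1 - δ) * (∑ i, a i * (K i r).toReal) / A ≥ (1 - δ) * L := by
    rw [ge_iff_le, le_div_iff₀ hA0]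
    have := mul_le_mul_of_nonneg_left hLe (by linarith : (0 : ℝ) ≤ 1 - δ)
    linarith
  linarith

instance mu_prob : IsProbabilityMeasure μ := by unfold μ; infer_instance

theorem bfs_exists_const (X : BFS) : ∃ c : ℂ, c ≠ 0 ∧ X.N (fun _ => c) ≤ 1 := by
  have h0 : X.N (fun _ => 1) ≠ 0 := by
    intro h
    have h1 := X.norm_eq_zero _ aestronglyMeasurable_const h
    obtain ⟨t, ht⟩ := h1.exists
    exact one_ne_zero ht
  have ht : X.N (fun _ => 1) ≠ ⊤ := X.const_finite.ne
  have hp : 0 < (X.N (fun _ => 1)).toReal := ENNReal.toReal_pos h0 ht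
  refine ⟨(((X.N (fun _ => 1)).toReal⁻¹ : ℝ) : ℂ), by exact_mod_cast (inv_pos.2 hp).ne', ?_⟩
  have h2 := X.smul_eq (((X.N (fun _ => 1)).toReal⁻¹ : ℝ) : ℂ) (fun _ => 1)
  simp only [mul_one] at h2
  rw [h2]
  have h3 : ((‖(((X.N (fun _ => 1)).toReal⁻¹ : ℝ) : ℂ)‖₊ : ℝ≥0∞)) = (X.N (fun _ => 1))⁻¹ := by
    change ‖(((X.N (fun _ => 1)).toReal⁻¹ : ℝ) : ℂ)‖ₑ = _
    rw [← ofReal_norm, Complex.norm_real, Real.norm_of_nonneg (inv_pos.2 hp).le,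
      ENNReal.ofReal_inv_of_pos hp, ENNReal.ofReal_toReal ht]
  rw [h3, ENNReal.inv_mul_cancel h0 ht]

theorem kdual_zero (Y : BFS) (z : 𝕋 → ℂ) (hz : AEStronglyMeasurable z μ)
    (h : kdualN Y.N z = 0) : z =ᵐ[μ] fun _ => 0 := by
  obtain ⟨c, hc, hN⟩ := bfs_exists_const Y
  have h1 : ∫⁻ t, ‖c * z t‖ₑ ∂μ ≤ kdualN Y.N z :=
    le_iSup (fun f : unitBall Y.N => ∫⁻ t, (‖f.1 t * z t‖₊ : ℝ≥0∞) ∂μ)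
      ⟨fun _ => c, aestronglyMeasurable_const, hN⟩
  rw [h, nonpos_iff_eq_zero, lintegral_eq_zero_iff' (hz.const_mul c).enorm] at h1
  filter_upwards [h1] with t ht
  simpa [hc] using ht

theorem mult_zero (X Y : BFS) (m : 𝕋 → ℂ) (hm : AEStronglyMeasurable m μ)
    (h : multN X.N Y.N m = 0) : m =ᵐ[μ] fun _ => 0 := by
  obtain ⟨c, hc, hN⟩ := bfs_exists_const X
  have h1 : Y.N (fun t => m t * c) ≤ multN X.N Y.N m :=
    le_iSup (fun f : unitBall X.N => Y.N (fun t => m t * f.1 t))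
      ⟨fun _ => c, aestronglyMeasurable_const, hN⟩
  rw [h, nonpos_iff_eq_zero] at h1
  filter_upwards [Y.norm_eq_zero _ (hm.mul_const c) h1] with t ht
  simpa [hc] using ht

theorem mult_smul (X Y : BFS) (c : ℂ) (m : 𝕋 → ℂ) :
    multN X.N Y.N (fun t => c * m t) = (‖c‖₊ : ℝ≥0∞) * multN X.N Y.N m := by
  unfold multN
  rw [ENNReal.mul_iSup]
  congr 1; ext f
  rw [← Y.smul_eq]
  simp only [mul_assoc]

/-- normalisation by a finite nonzero extended number -/
theorem nn_inv (a : ℝ≥0∞) (h0 : a ≠ 0) (ht : a ≠ ⊤) :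
    ((‖((a.toReal⁻¹ : ℝ) : ℂ)‖₊ : ℝ≥0∞)) = a⁻¹ := by
  have hp : 0 < a.toReal := ENNReal.toReal_pos h0 ht
  change ‖((a.toReal⁻¹ : ℝ) : ℂ)‖ₑ = _
  rw [← ofReal_norm, Complex.norm_real, Real.norm_of_nonneg (inv_pos.2 hp).le,
      ENNReal.ofReal_inv_of_pos hp, ENNReal.ofReal_toReal ht]

theorem kdual_holder (N : NormFn)
    (hs : ∀ (c : ℂ) f, N (fun t => c * f t) = (‖c‖₊ : ℝ≥0∞) * N f)
    (hz : ∀ f, AEStronglyMeasurable f μ → N f = 0 → f =ᵐ[μ] fun _ => 0)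
    (f g : 𝕋 → ℂ) (hf : AEStronglyMeasurable f μ) (hfin : N f ≠ ⊤) :
    ∫⁻ t, ‖f t * g t‖ₑ ∂μ ≤ N f * kdualN N g := by
  by_cases h0 : N f = 0
  · have h1 := hz f hf h0
    have : ∫⁻ t, ‖f t * g t‖ₑ ∂μ = 0 := by
      rw [← lintegral_zero (μ := μ)]
      refine lintegral_congr_ae ?_
      filter_upwards [h1] with t ht
      simp [ht]
    rw [this]; exact zero_le
  · have hc := nn_inv _ h0 hfin
    set c : ℂ := (((N f).toReal⁻¹ : ℝ) : ℂ)
    have hmem : (fun t => c * f t) ∈ unitBall N := by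
      refine ⟨hf.const_mul c, ?_⟩
      rw [hs, hc, ENNReal.inv_mul_cancel h0 hfin]
    have h1 : ∫⁻ t, ‖c * f t * g t‖ₑ ∂μ ≤ kdualN N g :=
      le_iSup (fun f : unitBall N => ∫⁻ t, (‖f.1 t * g t‖₊ : ℝ≥0∞) ∂μ) ⟨_, hmem⟩
    have h2 : ∫⁻ t, ‖c * f t * g t‖ₑ ∂μ = (N f)⁻¹ * ∫⁻ t, ‖f t * g t‖ₑ ∂μ := by
      rw [← lintegral_const_mul' _ _ (by simpa using h0)]
      refine lintegral_congr fun t => ?_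
      rw [mul_assoc, enorm_mul, ← hc]; rfl
    rw [h2] at h1
    calc ∫⁻ t, ‖f t * g t‖ₑ ∂μ = N f * ((N f)⁻¹ * ∫⁻ t, ‖f t * g t‖ₑ ∂μ) := by
          rw [← mul_assoc, ENNReal.mul_inv_cancel h0 hfin, one_mul]
      _ ≤ _ := by gcongr

theorem easy_dir (X Y : BFS) (g : 𝕋 → ℂ) :
    kdualN (multN X.N Y.N) g ≤ prodN X.N (kdualN Y.N) g := by
  refine le_iInf ?_
  rintro ⟨⟨x, z⟩, hx, hz, hg⟩
  refine iSup_le ?_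
  rintro ⟨a, ha, haN⟩
  simp only at hx hz hg ⊢
  change ∫⁻ t, ‖a t * g t‖ₑ ∂μ ≤ _
  have hzero : g =ᵐ[μ] (fun _ => 0) → ∫⁻ t, ‖a t * g t‖ₑ ∂μ ≤ X.N x * kdualN Y.N z := by
    intro h
    have : ∫⁻ t, ‖a t * g t‖ₑ ∂μ = 0 := by
      rw [← lintegral_zero (μ := μ)]
      refine lintegral_congr_ae ?_
      filter_upwards [h] with t ht
      simp [ht]
    rw [this]; exact zero_le
  by_cases h0 : X.N x = 0
  · apply hzero
    filter_upwards [hg, X.norm_eq_zero x hx h0] with t h1 h2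
    rw [h1, h2, zero_mul]
  by_cases hz0 : kdualN Y.N z = 0
  · apply hzero
    filter_upwards [hg, kdual_zero Y z hz hz0] with t h1 h2
    rw [h1, h2, mul_zero]
  by_cases ht : X.N x = ⊤
  · rw [ht, ENNReal.top_mul hz0]; exact le_top
  have hc := nn_inv _ h0 ht
  set c : ℂ := (((X.N x).toReal⁻¹ : ℝ) : ℂ)
  have hmem : (fun t => c * x t) ∈ unitBall X.N := by
    refine ⟨hx.const_mul c, ?_⟩
    rw [X.smul_eq, hc, ENNReal.inv_mul_cancel h0 ht]
  have h1 : Y.N (fun t => a t * (c * x t)) ≤ 1 :=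
    (le_iSup (fun f : unitBall X.N => Y.N (fun t => a t * f.1 t)) ⟨_, hmem⟩).trans haN
  have h2 : ∫⁻ t, ‖(a t * (c * x t)) * z t‖ₑ ∂μ ≤ kdualN Y.N z :=
    le_iSup (fun f : unitBall Y.N => ∫⁻ t, (‖f.1 t * z t‖₊ : ℝ≥0∞) ∂μ)
      ⟨_, ha.mul (hx.const_mul c), h1⟩
  have h3 : ∫⁻ t, ‖(a t * (c * x t)) * z t‖ₑ ∂μ = (X.N x)⁻¹ * ∫⁻ t, ‖a t * g t‖ₑ ∂μ := by
    rw [← lintegral_const_mul' _ _ (by simpa using h0)]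
    refine lintegral_congr_ae ?_
    filter_upwards [hg] with t h
    rw [h, ← hc]
    change _ = ‖c‖ₑ * _
    rw [← enorm_mul]; congr 1; ring
  rw [h3] at h2
  calc ∫⁻ t, ‖a t * g t‖ₑ ∂μ = X.N x * ((X.N x)⁻¹ * ∫⁻ t, ‖a t * g t‖ₑ ∂μ) := by
        rw [← mul_assoc, ENNReal.mul_inv_cancel h0 ht, one_mul]
    _ ≤ _ := by gcongr

/-- the weight function `1/r - 1`. -/
def phi (r : ℝ) : ℝ≥0∞ := (ENNReal.ofReal r)⁻¹ - 1

theorem phi_cont : Continuous phi :=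
  (ENNReal.continuous_sub_right 1).comp (continuous_inv.comp ENNReal.continuous_ofReal)

theorem phi_of_pos {r : ℝ} (h0 : 0 < r) : phi r = ENNReal.ofReal (1 / r - 1) := by
  unfold phi
  rw [← ENNReal.ofReal_inv_of_pos h0, ← ENNReal.ofReal_one, ← ENNReal.ofReal_sub _ zero_le_one,
    one_div]

theorem phi_zero : phi 0 = ⊤ := by simp [phi]

theorem phi_convex {a b s t : ℝ} (ha : 0 ≤ a) (hb : 0 ≤ b) (ha1 : a < 1) (hb1 : b < 1)
    (hs : 0 ≤ s) (ht : 0 ≤ t) (hst : s + t = 1) :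
    phi (s * a + t * b) ≤ ENNReal.ofReal s * phi a + ENNReal.ofReal t * phi b := by
  rcases hs.eq_or_lt with rfl | hs'
  · have : t = 1 := by linarith
    subst this; simp
  rcases ht.eq_or_lt with rfl | ht'
  · have : s = 1 := by linarith
    subst this; simp
  rcases ha.eq_or_lt with rfl | ha'
  · rw [phi_zero, ENNReal.mul_top (by simpa using hs')]; simp
  rcases hb.eq_or_lt with rfl | hb'
  · rw [phi_zero, ENNReal.mul_top (by simpa using ht')]; simp
  have hab : 0 < s * a + t * b := by positivity
  have h1 : 0 ≤ 1 / a - 1 := by rw [sub_nonneg, le_div_iff₀ ha']; linarith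
  have h2 : 0 ≤ 1 / b - 1 := by rw [sub_nonneg, le_div_iff₀ hb']; linarith
  rw [phi_of_pos ha', phi_of_pos hb', phi_of_pos hab, ← ENNReal.ofReal_mul hs,
    ← ENNReal.ofReal_mul ht, ← ENNReal.ofReal_add (by positivity) (by positivity)]
  apply ENNReal.ofReal_le_ofReal
  have : 1 / (s * a + t * b) ≤ s * (1 / a) + t * (1 / b) := by
    rw [div_le_iff₀ hab]
    have e : (s * (1 / a) + t * (1 / b)) * (s * a + t * b) - 1 = s * t * (a - b) ^ 2 / (a * b) := by
      have : t = 1 - s := by linarith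
      subst this
      field_simp
      ring
    have : 0 ≤ s * t * (a - b) ^ 2 / (a * b) := by positivity
    linarith
  nlinarith

theorem ratio_convex {a b s t : ℝ} (ha1 : a < 1) (hb1 : b < 1)
    (hs : 0 ≤ s) (ht : 0 ≤ t) (hst : s + t = 1) :
    (s * a + t * b) / (1 - (s * a + t * b)) ≤ s * (a / (1 - a)) + t * (b / (1 - b)) := by
  have h1 : 0 < 1 - a := by linarith
  have h2 : 0 < 1 - b := by linarith
  have h3 : 0 < 1 - (s * a + t * b) := by
    have : t = 1 - s := by linarith
    subst this
    rcases le_total a b with h | h <;> nlinarith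
  rw [div_le_iff₀ h3]
  have e : (s * (a / (1 - a)) + t * (b / (1 - b))) * (1 - (s * a + t * b)) - (s * a + t * b)
      = s * t * (a - b) ^ 2 / ((1 - a) * (1 - b)) := by
    have : t = 1 - s := by linarith
    subst this
    field_simp
    ring
  have : 0 ≤ s * t * (a - b) ^ 2 / ((1 - a) * (1 - b)) := by positivity
  linarith

/-- The parametrised unit ball of `X`, inside `L²`. -/
def BX (X : BFS) : Set (Lp ℝ 2 μ) :=
  {r | (∀ᵐ t ∂μ, 0 ≤ r t ∧ r t < 1) ∧ X.N (fun t => ((r t / (1 - r t) : ℝ) : ℂ)) ≤ 1}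

/-- The functional `∫ w (1/r - 1)`. -/
def KK (w : 𝕋 → ℝ≥0∞) (r : Lp ℝ 2 μ) : ℝ≥0∞ := ∫⁻ t, w t * phi (r t) ∂μ

theorem lp_meas (r : Lp ℝ 2 μ) : Measurable r := (Lp.stronglyMeasurable r).measurable

theorem aesm_ofReal {f : 𝕋 → ℝ} (hf : Measurable f) :
    AEStronglyMeasurable (fun t => ((f t : ℝ) : ℂ)) μ :=
  (Complex.measurable_ofReal.comp hf).aestronglyMeasurable

theorem lp_comb (r₁ r₂ : Lp ℝ 2 μ) (s t : ℝ) :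
    ∀ᵐ u ∂μ, (s • r₁ + t • r₂ : Lp ℝ 2 μ) u = s * r₁ u + t * r₂ u := by
  filter_upwards [Lp.coeFn_add (s • r₁) (t • r₂), Lp.coeFn_smul s r₁, Lp.coeFn_smul t r₂]
    with u h1 h2 h3
  rw [h1, Pi.add_apply, h2, h3]; simp

theorem BX_convex (X : BFS) : Convex ℝ (BX X) := by
  rintro r₁ ⟨h₁, n₁⟩ r₂ ⟨h₂, n₂⟩ s t hs ht hst
  refine ⟨?_, ?_⟩
  · filter_upwards [h₁, h₂, lp_comb r₁ r₂ s t] with u a b c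
    rw [c]
    refine ⟨by have := mul_nonneg hs a.1; have := mul_nonneg ht b.1; linarith, ?_⟩
    have : t = 1 - s := by linarith
    subst this
    rcases hs.eq_or_lt with rfl | hs'
    · linarith [b.2]
    · nlinarith [a.2, b.2]
  · have hm₁ : Measurable fun u => r₁ u / (1 - r₁ u) :=
      (lp_meas r₁).div (measurable_const.sub (lp_meas r₁))
    have hm₂ : Measurable fun u => r₂ u / (1 - r₂ u) :=
      (lp_meas r₂).div (measurable_const.sub (lp_meas r₂))
    have hm : Measurable fun u => (s • r₁ + t • r₂ : Lp ℝ 2 μ) u /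
        (1 - (s • r₁ + t • r₂ : Lp ℝ 2 μ) u) :=
      (lp_meas _).div (measurable_const.sub (lp_meas _))
    calc X.N (fun u => (((s • r₁ + t • r₂ : Lp ℝ 2 μ) u /
          (1 - (s • r₁ + t • r₂ : Lp ℝ 2 μ) u) : ℝ) : ℂ))
        ≤ X.N ((fun u => (s : ℂ) * ((r₁ u / (1 - r₁ u) : ℝ) : ℂ)) +
            (fun u => (t : ℂ) * ((r₂ u / (1 - r₂ u) : ℝ) : ℂ))) := by
          refine X.ideal _ _ (aesm_ofReal hm) ?_
          filter_upwards [h₁, h₂, lp_comb r₁ r₂ s t] with u a b c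
          have e : ((fun u => (s : ℂ) * ((r₁ u / (1 - r₁ u) : ℝ) : ℂ)) +
            (fun u => (t : ℂ) * ((r₂ u / (1 - r₂ u) : ℝ) : ℂ))) u =
              ((s * (r₁ u / (1 - r₁ u)) + t * (r₂ u / (1 - r₂ u)) : ℝ) : ℂ) := by
            simp
          rw [e, Complex.norm_real, Complex.norm_real, c]
          have hc := ratio_convex a.2 b.2 hs ht hst
          have h3 : 0 ≤ s * r₁ u + t * r₂ u := by
            have := mul_nonneg hs a.1; have := mul_nonneg ht b.1; linarith
          have h4 : 0 < 1 - (s * r₁ u + t * r₂ u) := by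
            have : t = 1 - s := by linarith
            subst this
            rcases hs.eq_or_lt with rfl | hs'
            · linarith [b.2]
            · nlinarith [a.2, b.2]
          have h5 := div_nonneg h3 h4.le
          rw [Real.norm_of_nonneg h5, Real.norm_of_nonneg (h5.trans hc)]
          exact hc
      _ ≤ _ := X.add_le _ _
      _ = ENNReal.ofReal s * X.N (fun u => ((r₁ u / (1 - r₁ u) : ℝ) : ℂ)) +
          ENNReal.ofReal t * X.N (fun u => ((r₂ u / (1 - r₂ u) : ℝ) : ℂ)) := by
          rw [X.smul_eq, X.smul_eq]
          congr 2
          · change ‖(s : ℂ)‖ₑ = _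
            rw [← ofReal_norm, Complex.norm_real, Real.norm_of_nonneg hs]
          · change ‖(t : ℂ)‖ₑ = _
            rw [← ofReal_norm, Complex.norm_real, Real.norm_of_nonneg ht]
      _ ≤ ENNReal.ofReal s * 1 + ENNReal.ofReal t * 1 := by gcongr
      _ = 1 := by rw [mul_one, mul_one, ← ENNReal.ofReal_add hs ht, hst, ENNReal.ofReal_one]

theorem KK_convex (X : BFS) (w : 𝕋 → ℝ≥0∞) (hw : AEMeasurable w μ) (a : Lp ℝ 2 μ) (ha : a ∈ BX X)
    (b : Lp ℝ 2 μ) (hb : b ∈ BX X) (s t : ℝ) (hs : 0 ≤ s) (ht : 0 ≤ t) (hst : s + t = 1) :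
    KK w (s • a + t • b) ≤ ENNReal.ofReal s * KK w a + ENNReal.ofReal t * KK w b := by
  unfold KK
  have hma : AEMeasurable (fun u => w u * phi (a u)) μ :=
    hw.mul (phi_cont.measurable.comp (lp_meas a)).aemeasurable
  rw [← lintegral_const_mul' _ _ ENNReal.ofReal_ne_top,
    ← lintegral_const_mul' _ _ ENNReal.ofReal_ne_top, ← lintegral_add_left' (hma.const_mul _)]
  refine lintegral_mono_ae ?_
  filter_upwards [ha.1, hb.1, lp_comb a b s t] with u h1 h2 h3
  rw [h3]
  calc w u * phi (s * a u + t * b u)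
      ≤ w u * (ENNReal.ofReal s * phi (a u) + ENNReal.ofReal t * phi (b u)) := by
        gcongr
        exact phi_convex h1.1 h2.1 h1.2 h2.2 hs ht hst
    _ = _ := by ring

theorem N_liminf (X : BFS) (hF : FatouN X.N) (f : ℕ → 𝕋 → ℝ) (h : 𝕋 → ℝ)
    (hf : ∀ n, Measurable (f n)) (hh : Measurable h) (h0 : ∀ n, ∀ᵐ t ∂μ, 0 ≤ f n t)
    (hlim : ∀ᵐ t ∂μ, Tendsto (fun n => f n t) atTop (𝓝 (h t)))
    (hN : ∀ n, X.N (fun t => (f n t : ℂ)) ≤ 1) : X.N (fun t => (h t : ℂ)) ≤ 1 := by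
  let v : ℕ → 𝕋 → ℝ≥0∞ := fun n t => ⨅ i, ENNReal.ofReal (f (n + i) t)
  have hv : ∀ n, Measurable (v n) := fun n =>
    Measurable.iInf fun i => (hf (n + i)).ennreal_ofReal
  have hvle : ∀ n t, v n t ≤ ENNReal.ofReal (f n t) := fun n t => iInf_le _ 0
  have hvfin : ∀ n t, v n t ≠ ⊤ := fun n t => ((hvle n t).trans_lt ENNReal.ofReal_lt_top).ne
  have hvmono : ∀ t, Monotone fun n => v n t := by
    intro t n m hnm
    refine le_iInf fun i => ?_
    have := iInf_le (fun i => ENNReal.ofReal (f (n + i) t)) (m - n + i)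
    have e : n + (m - n + i) = m + i := by omega
    rwa [e] at this
  have key := hF (fun n t => ((v n t).toReal : ℂ)) (fun t => (h t : ℂ))
    (fun n => aesm_ofReal (hv n).ennreal_toReal) (aesm_ofReal hh) ?_
  · rw [key]
    refine iSup_le fun n => (X.ideal _ _ (aesm_ofReal (hv n).ennreal_toReal) ?_).trans (hN n)
    filter_upwards [h0 n] with t ht
    rw [Complex.norm_real, Complex.norm_real, Real.norm_of_nonneg ENNReal.toReal_nonneg,
      Real.norm_of_nonneg ht]
    exact ENNReal.toReal_le_of_le_ofReal ht (hvle n t)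
  · filter_upwards [ae_all_iff.2 h0, hlim] with t ht hl
    have hn : ∀ n, ‖((v n t).toReal : ℂ)‖ = (v n t).toReal := fun n => by
      rw [Complex.norm_real, Real.norm_of_nonneg ENNReal.toReal_nonneg]
    have hpos : 0 ≤ h t := ge_of_tendsto' hl ht
    simp only [hn]
    rw [Complex.norm_real, Real.norm_of_nonneg hpos]
    refine ⟨fun n m hnm => ENNReal.toReal_mono (hvfin m t) (hvmono t hnm), ?_⟩
    have h1 : Tendsto (fun n => v n t) atTop (𝓝 (⨆ n, v n t)) := tendsto_atTop_iSup (hvmono t)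
    have h2 : (⨆ n, v n t) = ENNReal.ofReal (h t) := by
      have h3 : Tendsto (fun n => ENNReal.ofReal (f n t)) atTop (𝓝 (ENNReal.ofReal (h t))) :=
        (ENNReal.continuous_ofReal.tendsto _).comp hl
      rw [← h3.liminf_eq, liminf_eq_iSup_iInf_of_nat']
      refine iSup_congr fun n => iInf_congr fun i => ?_
      rw [add_comm]
    rw [h2] at h1
    have := (ENNReal.tendsto_toReal ENNReal.ofReal_ne_top).comp h1
    rwa [ENNReal.toReal_ofReal hpos] at this

/-- truncated version of `r / (1 - r)`. -/
def psi (k : ℕ) (r : ℝ) : ℝ :=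
  min r ((k : ℝ) / (k + 1)) / (1 - min r ((k : ℝ) / (k + 1)))

theorem psi_den (k : ℕ) (r : ℝ) : 0 < 1 - min r ((k : ℝ) / (k + 1)) := by
  have h1 : (k : ℝ) / (k + 1) < 1 := by rw [div_lt_one (by positivity)]; linarith
  have := min_le_right r ((k : ℝ) / (k + 1))
  linarith

theorem psi_cont (k : ℕ) : Continuous (psi k) := by
  unfold psi
  exact (continuous_id.min continuous_const).div
    (continuous_const.sub (continuous_id.min continuous_const)) fun r => (psi_den k r).ne'

theorem psi_nonneg (k : ℕ) {r : ℝ} (h : 0 ≤ r) : 0 ≤ psi k r :=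
  div_nonneg (le_min h (by positivity)) (psi_den k r).le

theorem psi_le (k : ℕ) {r : ℝ} (h0 : 0 ≤ r) (h1 : r < 1) : psi k r ≤ r / (1 - r) := by
  unfold psi
  have := min_le_left r ((k : ℝ) / (k + 1))
  have h2 : 0 < 1 - r := by linarith
  gcongr

theorem psi_big (k : ℕ) {r : ℝ} (h1 : 1 ≤ r) : psi k r = k := by
  unfold psi
  have h2 : (k : ℝ) / (k + 1) < 1 := by rw [div_lt_one (by positivity)]; linarith
  rw [min_eq_right (by linarith)]
  field_simp
  ring

theorem psi_tendsto {r : ℝ} (h1 : r < 1) :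
    Tendsto (fun k => psi k r) atTop (𝓝 (r / (1 - r))) := by
  have h2 : Tendsto (fun k : ℕ => (k : ℝ) / (k + 1)) atTop (𝓝 1) :=
    tendsto_natCast_div_add_atTop 1
  refine tendsto_const_nhds.congr' ?_
  filter_upwards [h2.eventually (lt_mem_nhds h1)] with k hk
  unfold psi
  rw [min_eq_left hk.le]

theorem BX_of_psi (X : BFS) (hF : FatouN X.N) (r : Lp ℝ 2 μ) (h0 : ∀ᵐ t ∂μ, 0 ≤ r t)
    (hN : ∀ k, X.N (fun t => (psi k (r t) : ℂ)) ≤ 1) : r ∈ BX X := by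
  have hlt : ∀ᵐ t ∂μ, r t < 1 := by
    let A : Set 𝕋 := {t | 1 ≤ r t}
    have hA : MeasurableSet A := measurableSet_le measurable_const (lp_meas r)
    let χ : 𝕋 → ℂ := A.indicator fun _ => 1
    have hχ : AEStronglyMeasurable χ μ := aestronglyMeasurable_const.indicator hA
    have hk : ∀ k : ℕ, (k : ℝ≥0∞) * X.N χ ≤ 1 := by
      intro k
      have h1 := X.smul_eq (k : ℂ) χ
      have h2 : ((‖(k : ℂ)‖₊ : ℝ≥0∞)) = k := by simp
      rw [h2] at h1
      rw [← h1]
      refine (X.ideal _ _ (hχ.const_mul _) ?_).trans (hN k)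
      filter_upwards [h0] with t ht
      by_cases htA : t ∈ A
      · simp only [χ, Set.indicator_of_mem htA]
        rw [psi_big k htA]; simp
      · simp only [χ, Set.indicator_of_notMem htA]; simp
    have hz : X.N χ = 0 := by
      by_contra hne
      obtain ⟨n, hn⟩ := ENNReal.exists_nat_mul_gt hne ENNReal.one_ne_top
      exact absurd (hk n) (not_le.2 hn)
    filter_upwards [X.norm_eq_zero χ hχ hz] with t ht
    by_contra hcon
    have htA : t ∈ A := not_lt.1 hcon
    simp [χ, Set.indicator_of_mem htA] at ht
  refine ⟨by filter_upwards [h0, hlt] with t a b using ⟨a, b⟩, ?_⟩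
  refine N_liminf X hF (fun k t => psi k (r t)) _ (fun k => (psi_cont k).measurable.comp (lp_meas r))
    ((lp_meas r).div (measurable_const.sub (lp_meas r))) (fun k => ?_) ?_ hN
  · filter_upwards [h0] with t ht using psi_nonneg k ht
  · filter_upwards [hlt] with t ht using psi_tendsto ht

theorem closed_level (X : BFS) (hF : FatouN X.N) (w : 𝕋 → ℝ≥0∞) (hw : AEMeasurable w μ)
    (hwt : ∀ t, w t ≠ ⊤) (L : ℝ≥0∞) : IsClosed {r : Lp ℝ 2 μ | r ∈ BX X ∧ KK w r ≤ L} := by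
  apply IsSeqClosed.isClosed
  intro r r' hr hlim
  obtain ⟨ns, hns, hae⟩ := (tendstoInMeasure_of_tendsto_Lp hlim).exists_seq_tendsto_ae
  have h0 : ∀ᵐ t ∂μ, ∀ n, 0 ≤ r n t ∧ r n t < 1 := ae_all_iff.2 fun n => (hr n).1.1
  refine ⟨BX_of_psi X hF r' ?_ fun k => ?_, ?_⟩
  · filter_upwards [h0, hae] with t a b using ge_of_tendsto' b fun n => (a _).1
  · refine N_liminf X hF (fun n t => psi k (r (ns n) t)) _
      (fun n => (psi_cont k).measurable.comp (lp_meas _))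
      ((psi_cont k).measurable.comp (lp_meas _)) (fun n => ?_) ?_ fun n => ?_
    · filter_upwards [h0] with t ht using psi_nonneg k (ht _).1
    · filter_upwards [hae] with t ht using ((psi_cont k).tendsto _).comp ht
    · refine (X.ideal _ _ (aesm_ofReal ((psi_cont k).measurable.comp (lp_meas _))) ?_).trans
        (hr (ns n)).1.2
      filter_upwards [h0] with t ht
      have h1 := psi_le k (ht (ns n)).1 (ht (ns n)).2
      have h2 := psi_nonneg k (ht (ns n)).1
      change ‖((psi k (r (ns n) t) : ℝ) : ℂ)‖ ≤ _
      rw [Complex.norm_real, Complex.norm_real, Real.norm_of_nonneg h2,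
        Real.norm_of_nonneg (h2.trans h1)]
      exact h1
  · unfold KK
    calc ∫⁻ t, w t * phi (r' t) ∂μ
        = ∫⁻ t, liminf (fun n => w t * phi (r (ns n) t)) atTop ∂μ := by
          refine lintegral_congr_ae ?_
          filter_upwards [hae] with t ht
          refine (Tendsto.liminf_eq ?_).symm
          exact ENNReal.Tendsto.const_mul ((phi_cont.tendsto _).comp ht) (Or.inr (hwt t))
      _ ≤ liminf (fun n => ∫⁻ t, w t * phi (r (ns n) t) ∂μ) atTop :=
          lintegral_liminf_le' fun n =>
            hw.mul (phi_cont.measurable.comp (lp_meas _)).aemeasurable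
      _ ≤ liminf (fun _ : ℕ => L) atTop :=
          liminf_le_liminf (Eventually.of_forall fun n => (hr (ns n)).2)
      _ = L := liminf_const L

theorem BX_norm (X : BFS) (r : Lp ℝ 2 μ) (hr : r ∈ BX X) : ‖r‖ ≤ 1 := by
  have h := Lp.norm_le_of_ae_bound (f := r) (C := 1) zero_le_one
    (by filter_upwards [hr.1] with t ht; rw [Real.norm_of_nonneg ht.1]; exact ht.2.le)
  simpa [measureUnivNNReal] using h

/-- an element of `BX` from an element of the unit ball of `X` -/
theorem BX_mk (X : BFS) (x : 𝕋 → ℂ) (hx : AEStronglyMeasurable x μ) (hN : X.N x ≤ 1) :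
    ∃ r ∈ BX X, ∀ᵐ t ∂μ, r t = ‖x t‖ / (1 + ‖x t‖) := by
  have hm : AEStronglyMeasurable (fun t => ‖x t‖ / (1 + ‖x t‖)) μ :=
    (hx.norm.aemeasurable.div (hx.norm.aemeasurable.const_add 1)).aestronglyMeasurable
  have hL : MemLp (fun t => ‖x t‖ / (1 + ‖x t‖)) 2 μ := by
    refine MemLp.of_bound hm 1 (Eventually.of_forall fun t => ?_)
    rw [Real.norm_of_nonneg (by positivity), div_le_one (by positivity)]
    linarith
  have hc := hL.coeFn_toLp
  refine ⟨hL.toLp _, ⟨?_, ?_⟩, hc⟩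
  · filter_upwards [hc] with t ht
    rw [ht]
    refine ⟨by positivity, ?_⟩
    rw [div_lt_one (by positivity)]; linarith
  · refine (X.ideal _ _ (aesm_ofReal ((lp_meas _).div (measurable_const.sub (lp_meas _)))) ?_).trans
      hN
    filter_upwards [hc] with t ht
    rw [Complex.norm_real, Pi.div_apply, Pi.sub_apply, ht]
    have : ‖x t‖ / (1 + ‖x t‖) / (1 - ‖x t‖ / (1 + ‖x t‖)) = ‖x t‖ := by
      have : 1 + ‖x t‖ ≠ 0 := by positivity
      field_simp
      ring
    rw [this, norm_norm]

theorem factor_step (X Y : BFS) (c₂ : ℝ≥0∞) (hc₂ : c₂ < ⊤)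
    (hfact₂ : ∀ h, prodN X.N (multN X.N Y.N) h ≤ c₂ * Y.N h)
    (g y : 𝕋 → ℂ) (hyN : Y.N y ≤ 1) :
    ∃ r ∈ BX X, KK (fun t => ‖g t‖ₑ * ‖y t‖ₑ) r ≤ (c₂ + 1) * kdualN (multN X.N Y.N) g := by
  have h1 : prodN X.N (multN X.N Y.N) y < c₂ + 1 := by
    refine (hfact₂ y).trans_lt ?_
    calc c₂ * Y.N y ≤ c₂ * 1 := by gcongr
      _ = c₂ := mul_one _
      _ < c₂ + 1 := ENNReal.lt_add_right hc₂.ne one_ne_zero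
  obtain ⟨⟨⟨x, m⟩, hx, hm, hy⟩, hlt⟩ := iInf_lt_iff.1 h1
  simp only at hx hm hy hlt
  have hzero : y =ᵐ[μ] (fun _ => 0) → ∃ r ∈ BX X, KK (fun t => ‖g t‖ₑ * ‖y t‖ₑ) r ≤
      (c₂ + 1) * kdualN (multN X.N Y.N) g := by
    intro h
    obtain ⟨c, -, hc⟩ := bfs_exists_const X
    obtain ⟨r, hr, -⟩ := BX_mk X _ aestronglyMeasurable_const hc
    refine ⟨r, hr, ?_⟩
    have : KK (fun t => ‖g t‖ₑ * ‖y t‖ₑ) r = 0 := by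
      unfold KK
      rw [← lintegral_zero (μ := μ)]
      refine lintegral_congr_ae ?_
      filter_upwards [h] with t ht
      simp [ht]
    rw [this]; exact zero_le
  by_cases h0 : X.N x = 0
  · apply hzero
    filter_upwards [hy, X.norm_eq_zero x hx h0] with t h1 h2
    rw [h1, h2, zero_mul]
  by_cases hm0 : multN X.N Y.N m = 0
  · apply hzero
    filter_upwards [hy, mult_zero X Y m hm hm0] with t h1 h2
    rw [h1, h2, mul_zero]
  have htop : X.N x * multN X.N Y.N m ≠ ⊤ := (hlt.trans_le le_top).ne
  have hxt : X.N x ≠ ⊤ := fun h => htop (by rw [h, ENNReal.top_mul hm0])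
  have hmt : multN X.N Y.N m ≠ ⊤ := fun h => htop (by rw [h, ENNReal.mul_top h0])
  have hc := nn_inv _ h0 hxt
  have hp : 0 < (X.N x).toReal := ENNReal.toReal_pos h0 hxt
  set c : ℂ := (((X.N x).toReal⁻¹ : ℝ) : ℂ) with hcdef
  have hc0 : c ≠ 0 := by
    rw [hcdef]; exact_mod_cast (inv_pos.2 hp).ne'
  have hcN : X.N (fun t => c * x t) ≤ 1 := by
    rw [X.smul_eq, hc, ENNReal.inv_mul_cancel h0 hxt]
  obtain ⟨r, hr, hrx⟩ := BX_mk X _ (hx.const_mul c) hcN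
  refine ⟨r, hr, ?_⟩
  have hinv : (‖c‖ₑ)⁻¹ = X.N x := by
    change ((‖c‖₊ : ℝ≥0∞))⁻¹ = _
    rw [hc, inv_inv]
  have hphi : ∀ᵐ t ∂μ, ‖g t‖ₑ * ‖y t‖ₑ * phi (r t) ≤ X.N x * ‖m t * g t‖ₑ := by
    filter_upwards [hy, hrx] with t h1 h2
    by_cases hx0 : x t = 0
    · simp [h1, hx0]
    have hcx : 0 < ‖c * x t‖ := norm_pos_iff.2 (mul_ne_zero hc0 hx0)
    have e : phi (r t) = (‖c * x t‖ₑ)⁻¹ := by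
      rw [h2, phi_of_pos (by positivity), ← ofReal_norm, ← ENNReal.ofReal_inv_of_pos hcx]
      congr 1
      field_simp
      ring
    have hxe : ‖x t‖ₑ ≠ 0 := by simpa using hx0
    have hxe' : ‖x t‖ₑ ≠ ⊤ := enorm_ne_top
    rw [e, h1, enorm_mul, enorm_mul, enorm_mul,
      ENNReal.mul_inv (Or.inr hxe') (Or.inr hxe), hinv]
    apply le_of_eq
    calc ‖g t‖ₑ * (‖x t‖ₑ * ‖m t‖ₑ) * (X.N x * ‖x t‖ₑ⁻¹)
        = X.N x * (‖m t‖ₑ * ‖g t‖ₑ) * (‖x t‖ₑ * ‖x t‖ₑ⁻¹) := by ring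
      _ = _ := by rw [ENNReal.mul_inv_cancel hxe hxe', mul_one]
  calc KK (fun t => ‖g t‖ₑ * ‖y t‖ₑ) r ≤ ∫⁻ t, X.N x * ‖m t * g t‖ₑ ∂μ := lintegral_mono_ae hphi
    _ = X.N x * ∫⁻ t, ‖m t * g t‖ₑ ∂μ := lintegral_const_mul' _ _ hxt
    _ ≤ X.N x * (multN X.N Y.N m * kdualN (multN X.N Y.N) g) := by
        gcongr
        exact kdual_holder _ (mult_smul X Y) (mult_zero X Y) m g hm hmt
    _ = (X.N x * multN X.N Y.N m) * kdualN (multN X.N Y.N) g := by ring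
    _ ≤ _ := by gcongr

theorem hard_step (X Y : BFS) (hFX : FatouN X.N) (c₂ : ℝ≥0∞) (hc₂ : c₂ < ⊤)
    (hfact₂ : ∀ h, prodN X.N (multN X.N Y.N) h ≤ c₂ * Y.N h)
    (g : 𝕋 → ℂ) (hg : AEStronglyMeasurable g μ) (hD : kdualN (multN X.N Y.N) g ≠ ⊤)
    (L : ℝ) (hL : ((c₂ + 1) * kdualN (multN X.N Y.N) g).toReal < L) :
    prodN X.N (kdualN Y.N) g ≤ ENNReal.ofReal L := by
  have hDC : (c₂ + 1) * kdualN (multN X.N Y.N) g ≠ ⊤ :=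
    ENNReal.mul_ne_top (by simpa using hc₂.ne) hD
  set C := ((c₂ + 1) * kdualN (multN X.N Y.N) g).toReal with hCdef
  have hCo : (c₂ + 1) * kdualN (multN X.N Y.N) g = ENNReal.ofReal C :=
    (ENNReal.ofReal_toReal hDC).symm
  obtain ⟨cY, hcY, hcYN⟩ := bfs_exists_const Y
  have hne : Nonempty (unitBall Y.N) := ⟨⟨fun _ => cY, aestronglyMeasurable_const, hcYN⟩⟩
  let w : (𝕋 → ℂ) → 𝕋 → ℝ≥0∞ := fun y t => ‖g t‖ₑ * ‖y t‖ₑ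
  have hw : ∀ y : unitBall Y.N, AEMeasurable (w y.1) μ := fun y => hg.enorm.mul y.2.1.enorm
  have hwt : ∀ y t, w y t ≠ ⊤ := fun y t => ENNReal.mul_ne_top enorm_ne_top enorm_ne_top
  obtain ⟨r, hr⟩ := hilbert_fip
    (fun y : unitBall Y.N => {r : Lp ℝ 2 μ | r ∈ BX X ∧ KK (w y.1) r ≤ ENNReal.ofReal L})
    (fun y => closed_level X hFX _ (hw y) (hwt y.1) _)
    (by
      rintro y a ⟨ha, ha'⟩ b ⟨hb, hb'⟩ s t hs ht hst
      refine ⟨BX_convex X ha hb hs ht hst,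
        (KK_convex X _ (hw y) a ha b hb s t hs ht hst).trans ?_⟩
      calc ENNReal.ofReal s * KK (w y.1) a + ENNReal.ofReal t * KK (w y.1) b
          ≤ ENNReal.ofReal s * ENNReal.ofReal L + ENNReal.ofReal t * ENNReal.ofReal L := by
            gcongr
        _ = ENNReal.ofReal L := by
            rw [← add_mul, ← ENNReal.ofReal_add hs ht, hst, ENNReal.ofReal_one, one_mul])
    1 (fun y r hr => BX_norm X r hr.1)
    (by
      intro F hFne
      have : Nonempty F := hFne.to_subtype
      obtain ⟨r, hr, hrK⟩ := finite_minimax (ι := F) (BX X) (fun y r => KK (w y.1.1) r)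
        (BX_convex X) (fun y a ha b hb s t hs ht hst =>
          KK_convex X _ (hw y.1) a ha b hb s t hs ht hst) C L ENNReal.toReal_nonneg hL
        (by
          intro l hl hls
          let f : F → 𝕋 → ℂ := fun i t => (l i : ℂ) * ((‖i.1.1 t‖ : ℝ) : ℂ)
          have hsum : ∀ s : Finset F, Y.N (∑ i ∈ s, f i) ≤ ∑ i ∈ s, ENNReal.ofReal (l i) := by
            classical
            intro s
            induction s using Finset.induction_on with
            | empty =>
              have := Y.smul_eq 0 (fun _ => 0)
              simp only [zero_mul, nnnorm_zero, ENNReal.coe_zero] at this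
              simp only [Finset.sum_empty]
              exact this.le
            | insert i s his ih =>
              rw [Finset.sum_insert his, Finset.sum_insert his]
              refine (Y.add_le _ _).trans (add_le_add ?_ ih)
              have h2 : ((‖(l i : ℂ)‖₊ : ℝ≥0∞)) = ENNReal.ofReal (l i) := by
                change ‖(l i : ℂ)‖ₑ = _
                rw [← ofReal_norm, Complex.norm_real, Real.norm_of_nonneg (hl i).le]
              have h3 : Y.N (fun t => ((‖i.1.1 t‖ : ℝ) : ℂ)) ≤ 1 := by
                refine (Y.ideal _ _ ?_ ?_).trans i.1.2.2
                · exact Complex.continuous_ofReal.comp_aestronglyMeasurable i.1.2.1.norm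
                · exact Eventually.of_forall fun t => by
                    rw [Complex.norm_real, norm_norm]
              simp only [f]
              rw [Y.smul_eq, h2]
              calc _ ≤ ENNReal.ofReal (l i) * 1 := by gcongr
                _ = _ := mul_one _
          have hy1 : Y.N (∑ i, f i) ≤ 1 := by
            refine (hsum Finset.univ).trans ?_
            rw [← ENNReal.ofReal_sum_of_nonneg fun i _ => (hl i).le, hls, ENNReal.ofReal_one]
          obtain ⟨r, hr, hrK⟩ := factor_step X Y c₂ hc₂ hfact₂ g _ hy1
          refine ⟨r, hr, ?_⟩
          rw [← hCo]
          refine le_trans (le_of_eq ?_) hrK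
          have hnorm : ∀ t, ‖(∑ i, f i) t‖ₑ = ∑ i, ENNReal.ofReal (l i) * ‖i.1.1 t‖ₑ := by
            intro t
            have e : (∑ i, f i) t = ((∑ i, l i * ‖i.1.1 t‖ : ℝ) : ℂ) := by
              rw [Finset.sum_apply]; simp [f]
            rw [e, ← ofReal_norm, Complex.norm_real, Real.norm_of_nonneg
              (Finset.sum_nonneg fun i _ => mul_nonneg (hl i).le (norm_nonneg _)),
              ENNReal.ofReal_sum_of_nonneg fun i _ => mul_nonneg (hl i).le (norm_nonneg _)]
            refine Finset.sum_congr rfl fun i _ => ?_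
            rw [ENNReal.ofReal_mul (hl i).le, ofReal_norm]
          unfold KK
          have hswap : ∑ i, ENNReal.ofReal (l i) * ∫⁻ t, w i.1.1 t * phi (r t) ∂μ
              = ∫⁻ t, ∑ i, ENNReal.ofReal (l i) * (w i.1.1 t * phi (r t)) ∂μ := by
            rw [lintegral_finsetSum' _ fun i _ => ((hw i.1).mul
              (phi_cont.measurable.comp (lp_meas r)).aemeasurable).const_mul _]
            exact Finset.sum_congr rfl fun i _ =>
              (lintegral_const_mul' _ _ ENNReal.ofReal_ne_top).symm
          rw [hswap]
          refine lintegral_congr fun t => ?_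
          beta_reduce
          rw [hnorm t, Finset.mul_sum, Finset.sum_mul]
          refine Finset.sum_congr rfl fun i _ => ?_
          simp only [w]; ring)
      exact ⟨r, fun y hy => ⟨hr, (hrK ⟨y, hy⟩).le⟩⟩)
  -- the factorization
  have hrB : r ∈ BX X := (hr ⟨fun _ => cY, aestronglyMeasurable_const, hcYN⟩).1
  have hrK : ∀ y : unitBall Y.N, KK (w y.1) r ≤ ENNReal.ofReal L := fun y => (hr y).2
  let x : 𝕋 → ℂ := fun t => ((r t / (1 - r t) : ℝ) : ℂ)
  have hxm : AEStronglyMeasurable x μ :=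
    aesm_ofReal ((lp_meas r).div (measurable_const.sub (lp_meas r)))
  let z : 𝕋 → ℂ := fun t => g t * (x t)⁻¹
  have hzm : AEStronglyMeasurable z μ :=
    hg.mul (hxm.aemeasurable.inv.aestronglyMeasurable)
  have hpos : ∀ᵐ t ∂μ, g t ≠ 0 → r t ≠ 0 := by
    have h1 : KK (w fun _ => cY) r ≠ ⊤ :=
      ((hrK ⟨fun _ => cY, aestronglyMeasurable_const, hcYN⟩).trans_lt ENNReal.ofReal_lt_top).ne
    have hmeas : AEMeasurable (fun t => w (fun _ => cY) t * phi (r t)) μ :=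
      (hw ⟨fun _ => cY, aestronglyMeasurable_const, hcYN⟩).mul
        (phi_cont.measurable.comp (lp_meas r)).aemeasurable
    filter_upwards [ae_lt_top' hmeas h1] with t ht hgt hrt
    rw [hrt, phi_zero, ENNReal.mul_top (by simp [w, hgt, hcY])] at ht
    exact lt_irrefl _ ht
  have hgz : g =ᵐ[μ] fun t => x t * z t := by
    filter_upwards [hpos, hrB.1] with t h1 h2
    by_cases hg0 : g t = 0
    · simp [z, hg0]
    have hx0 : x t ≠ 0 := by
      simp only [x]
      exact_mod_cast div_ne_zero (h1 hg0) (by linarith [h2.2])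
    simp only [z]
    field_simp
  have hkz : kdualN Y.N z ≤ ENNReal.ofReal L := by
    refine iSup_le fun y => ?_
    change ∫⁻ t, ‖y.1 t * z t‖ₑ ∂μ ≤ _
    refine le_trans (lintegral_mono_ae ?_) (hrK y)
    filter_upwards [hpos, hrB.1] with t h1 h2
    by_cases hg0 : g t = 0
    · simp [z, hg0]
    have hrp : 0 < r t := lt_of_le_of_ne h2.1 (h1 hg0).symm
    have h3 : 0 < 1 - r t := by linarith [h2.2]
    have e : phi (r t) = ‖(x t)⁻¹‖ₑ := by
      simp only [x]
      rw [phi_of_pos hrp, ← ofReal_norm, norm_inv, Complex.norm_real,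
        Real.norm_of_nonneg (by positivity)]
      congr 1
      field_simp
    simp only [w, z]
    rw [e, enorm_mul, enorm_mul]
    apply le_of_eq; ring
  calc prodN X.N (kdualN Y.N) g ≤ X.N x * kdualN Y.N z :=
        iInf_le (fun p : {p : (𝕋 → ℂ) × (𝕋 → ℂ) //
          AEStronglyMeasurable p.1 μ ∧ AEStronglyMeasurable p.2 μ ∧
          g =ᵐ[μ] fun t => p.1 t * p.2 t} => X.N p.1.1 * kdualN Y.N p.1.2)
          ⟨(x, z), hxm, hzm, hgz⟩
    _ ≤ 1 * ENNReal.ofReal L := by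
        gcongr
        exact hrB.2
    _ = _ := one_mul _

/-- **Cancellation lemma.** Let `X, Y` be rearrangement-invariant Banach
function spaces over `𝕋` with the Fatou property. If `X` factorizes `Y`, i.e.
`X ⊙ M(X,Y) = Y` (with equivalence of norms), then `M(X,Y)' = X ⊙ Y'`
(with equivalence of norms). -/
theorem cancellation_lemma (X Y : BFS) (hriX : RearrInvN X.N) (hriY : RearrInvN Y.N)
    (hFX : FatouN X.N) (hFY : FatouN Y.N)
    (c₁ c₂ : ℝ≥0∞) (hc₁ : 0 < c₁) (hc₂ : c₂ < ⊤)
    (hfact₁ : ∀ h, c₁ * Y.N h ≤ prodN X.N (multN X.N Y.N) h)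
    (hfact₂ : ∀ h, prodN X.N (multN X.N Y.N) h ≤ c₂ * Y.N h) :
    ∃ d₁ d₂ : ℝ≥0∞, 0 < d₁ ∧ d₂ < ⊤ ∧
      ∀ g, AEStronglyMeasurable g μ →
        d₁ * prodN X.N (kdualN Y.N) g ≤ kdualN (multN X.N Y.N) g ∧
        kdualN (multN X.N Y.N) g ≤ d₂ * prodN X.N (kdualN Y.N) g := by
  refine ⟨(c₂ + 1)⁻¹, 1, ?_, ENNReal.one_lt_top, fun g hg => ⟨?_, ?_⟩⟩
  · simpa using hc₂.ne
  · by_cases hD : kdualN (multN X.N Y.N) g = ⊤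
    · rw [hD]; exact le_top
    have hc1 : c₂ + 1 ≠ ⊤ := by simpa using hc₂.ne
    have hDC : (c₂ + 1) * kdualN (multN X.N Y.N) g ≠ ⊤ := ENNReal.mul_ne_top hc1 hD
    have hle : prodN X.N (kdualN Y.N) g ≤ (c₂ + 1) * kdualN (multN X.N Y.N) g := by
      refine ENNReal.le_of_forall_pos_le_add fun ε hε _ => ?_
      have h1 := hard_step X Y hFX c₂ hc₂ hfact₂ g hg hD
        (((c₂ + 1) * kdualN (multN X.N Y.N) g).toReal + ε) (by
          have : (0 : ℝ) < ε := hε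
          linarith)
      rwa [ENNReal.ofReal_add ENNReal.toReal_nonneg ε.coe_nonneg, ENNReal.ofReal_toReal hDC,
        ENNReal.ofReal_coe_nnreal] at h1
    calc (c₂ + 1)⁻¹ * prodN X.N (kdualN Y.N) g
        ≤ (c₂ + 1)⁻¹ * ((c₂ + 1) * kdualN (multN X.N Y.N) g) := by gcongr
      _ = kdualN (multN X.N Y.N) g := by
        rw [← mul_assoc, ENNReal.inv_mul_cancel (by simp) hc1, one_mul]
  · rw [one_mul]; exact easy_dir X Y g
end
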